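/- (Lemma 2 of the Appendix.) In the channel model with a history-dependent deterministic encoder ψ, define the belief process (Π_0, H_0) := (uniform on 𝒲, w ↦ point mass at u₁) and (Π_t, H_t) := F(Π_{t-1}, H_{t-1}, φ^{Z_{1:t-1}}_t, Y_t), and define the value functions V_t by backward dynamic programming: V_{n+1}(σ, u, w) := Σ_{(π,η)} σ(π,η)·(1 − max_{w̃} π(w̃)) and V_t(σ, u, w) := min over φ ∈ (𝒲×𝒰→𝒳) of Σ_{y,z} Q^f(y|φ(w,u)) Q^b(z|y) V_{t+1}(G¹(σ,φ,z,u,w), G²(u,φ,z,w), w). Then for every 1 ≤ t ≤ n, every w ∈ 𝒲, and every z_{1:t-1} with P(W = w, Z_{1:t-1} = z_{1:t-1}) > 0, letting σ_t be the conditional law of (Π_{t-1}, H_{t-1}) given (W = w, Z_{1:t-1} = z_{1:t-1}), u_t the memory determined by (w, z_{1:t-1}) via G², σ_{t+1}(z_t) the conditional law of (Π_t, H_t) given (W = w, Z_{1:t} = (z_{1:t-1},z_t)), and u_{t+1}(z_t) := G²(u_t, φ^{z_{1:t-1}}_t, z_t, w), one has V_t(σ_t, u_t, w) ≤ Σ_{z_t}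 P(Z_t = z_t | W = w, Z_{1:t-1} = z_{1:t-1}) · V_{t+1}(σ_{t+1}(z_t), u_{t+1}(z_t), w). -/

import Mathlib

open scoped ENNReal Classical
open Finset

namespace NoisyFeedback

variable {W X Y Z U : Type*}

/-- Memory evolution: `mem G2 u1 φ w t zs` is the sender's memory after having
observed the feedback symbols `zs = z_{1:t}`. -/
def mem (G2 : U → (W × U → X) → Z → W → U) (u1 : U) (φ : ℕ → W × U → X) (w : W) :
    (t : ℕ) → (Fin t → Z) → U
  | 0, _ => u1
  | t + 1, zs => G2 (mem G2 u1 φ w t (Fin.init zs)) (φ t) (zs (Fin.last t)) w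

variable [Fintype W] [Fintype X] [Fintype Y] [Fintype Z] [Fintype U]

/-- Joint pmf `P(W = w, Y_{1:t} = ys, Z_{1:t} = zs)` of the channel model with
Markov encoders `φ`. -/
noncomputable def jointP (Qf : X → PMF Y) (Qb : Y → PMF Z)
    (G2 : U → (W × U → X) → Z → W → U) (u1 : U) (φ : ℕ → W × U → X)
    (t : ℕ) (w : W) (ys : Fin t → Y) (zs : Fin t → Z) : ℝ≥0∞ :=
  (Fintype.card W : ℝ≥0∞)⁻¹ *
    ∏ i : Fin t,
      Qf (φ i (w, mem G2 u1 φ w i (fun j => zs (Fin.castLE i.2.le j)))) (ys i) *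
        Qb (ys i) (zs i)

/-- `P(Y_{1:t} = ys)`. -/
noncomputable def probY (Qf : X → PMF Y) (Qb : Y → PMF Z)
    (G2 : U → (W × U → X) → Z → W → U) (u1 : U) (φ : ℕ → W × U → X)
    (t : ℕ) (ys : Fin t → Y) : ℝ≥0∞ :=
  ∑ w : W, ∑ zs : Fin t → Z, jointP Qf Qb G2 u1 φ t w ys zs

/-- `P(W = w, Y_{1:t} = ys)`. -/
noncomputable def probWY (Qf : X → PMF Y) (Qb : Y → PMF Z)
    (G2 : U → (W × U → X) → Z → W → U) (u1 : U) (φ : ℕ → W × U → X)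
    (t : ℕ) (ys : Fin t → Y) (w : W) : ℝ≥0∞ :=
  ∑ zs : Fin t → Z, jointP Qf Qb G2 u1 φ t w ys zs

/-- `P(W = w, Z_{1:t} = zs)`. -/
noncomputable def probWZ (Qf : X → PMF Y) (Qb : Y → PMF Z)
    (G2 : U → (W × U → X) → Z → W → U) (u1 : U) (φ : ℕ → W × U → X)
    (t : ℕ) (w : W) (zs : Fin t → Z) : ℝ≥0∞ :=
  ∑ ys : Fin t → Y, jointP Qf Qb G2 u1 φ t w ys zs

/-- `P(W = w, U_{t+1} = u, Y_{1:t} = ys)` (memory after `t` feedback symbols). -/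
noncomputable def probWUY (Qf : X → PMF Y) (Qb : Y → PMF Z)
    (G2 : U → (W × U → X) → Z → W → U) (u1 : U) (φ : ℕ → W × U → X)
    (t : ℕ) (ys : Fin t → Y) (w : W) (u : U) : ℝ≥0∞ :=
  ∑ zs : Fin t → Z,
    if mem G2 u1 φ w t zs = u then jointP Qf Qb G2 u1 φ t w ys zs else 0


/-- Belief states of the receiver: a belief `π` on the message together with, for each
message `w`, a belief `η w` on the sender's memory. -/
@[reducible] def Belief (W U : Type*) : Type _ := (W → ℝ≥0∞) × (W → U → ℝ≥0∞)

/-- Update map `F¹` of the receiver's belief on the message. -/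
noncomputable def F1 (Qf : X → PMF Y) (p : Belief W U) (φ : W × U → X) (y : Y) :
    W → ℝ≥0∞ := fun w =>
  p.1 w * (∑ u : U, p.2 w u * Qf (φ (w, u)) y) /
    ∑ w' : W, p.1 w' * ∑ u : U, p.2 w' u * Qf (φ (w', u)) y

/-- Update map `F²` of the receiver's conditional belief on the sender's memory. -/
noncomputable def F2 (Qf : X → PMF Y) (Qb : Y → PMF Z)
    (G2 : U → (W × U → X) → Z → W → U) (p : Belief W U) (φ : W × U → X) (y : Y) :
    W → U → ℝ≥0∞ := fun w u' =>
  (∑ u : U, ∑ z : Z,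
      p.2 w u * Qf (φ (w, u)) y * Qb y z * (if u' = G2 u φ z w then 1 else 0)) /
    ∑ u : U, p.2 w u * Qf (φ (w, u)) y

/-- Combined belief update `F = (F¹, F²)`. -/
noncomputable def Fb (Qf : X → PMF Y) (Qb : Y → PMF Z)
    (G2 : U → (W × U → X) → Z → W → U) (p : Belief W U) (φ : W × U → X) (y : Y) :
    Belief W U :=
  (F1 Qf p φ y, F2 Qf Qb G2 p φ y)

/-- Sender belief update `G¹`: update of the sender's belief `σ` over receiver belief
states upon transmitting with encoding function `φ` (with memory `u`, message `w`)
and receiving feedback `z`. -/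
noncomputable def G1 (Qf : X → PMF Y) (Qb : Y → PMF Z)
    (G2 : U → (W × U → X) → Z → W → U) (σ : Belief W U → ℝ≥0∞)
    (φ : W × U → X) (z : Z) (u : U) (w : W) : Belief W U → ℝ≥0∞ := fun b =>
  (∑' p : Belief W U, σ p * ∑ y : Y,
      Qf (φ (w, u)) y * Qb y z * (if b = Fb Qf Qb G2 p φ y then 1 else 0)) /
    ∑ y : Y, Qf (φ (w, u)) y * Qb y z

/-- Initial belief state: uniform on the messages, point mass at `u1` on the memory. -/
noncomputable def b0 [Fintype W] (u1 : U) : Belief W U :=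
  (fun _ => (Fintype.card W : ℝ≥0∞)⁻¹, fun _ u => if u = u1 then 1 else 0)

/-- Initial sender belief: point mass at the initial belief state `b0`. -/
noncomputable def σ0 [Fintype W] (u1 : U) : Belief W U → ℝ≥0∞ := fun b =>
  if b = b0 u1 then 1 else 0

/-- The receiver belief process `(Π_t, H_t)` as a function of the channel outputs,
under the Markov encoders `φ`. -/
noncomputable def beliefs (Qf : X → PMF Y) (Qb : Y → PMF Z)
    (G2 : U → (W × U → X) → Z → W → U) (u1 : U) (φ : ℕ → W × U → X) :
    (t : ℕ) → (Fin t → Y) → Belief W U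
  | 0, _ => b0 u1
  | t + 1, ys =>
      Fb Qf Qb G2 (beliefs Qf Qb G2 u1 φ t (Fin.init ys)) (φ t) (ys (Fin.last t))

/-- Dynamic-programming value functions, indexed by the number `k` of remaining
transmissions: `Vk k = V_{n+1-k}` of the paper, so `Vk 0 = V_{n+1}` is the terminal
cost `Σ_{(π,η)} σ(π,η) (1 - max_w̃ π(w̃))`, and each step minimizes over the (finitely
many) encoding functions `φ : 𝒲 × 𝒰 → 𝒳`. -/
noncomputable def Vk (Qf : X → PMF Y) (Qb : Y → PMF Z)
    (G2 : U → (W × U → X) → Z → W → U) :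
    ℕ → (Belief W U → ℝ≥0∞) → U → W → ℝ≥0∞
  | 0, σ, _, _ => ∑' p : Belief W U, σ p * (1 - univ.sup fun w' : W => p.1 w')
  | k + 1, σ, u, w =>
      ⨅ φ : W × U → X,
        ∑ y : Y, ∑ z : Z,
          Qf (φ (w, u)) y * Qb y z *
            Vk Qf Qb G2 k (G1 Qf Qb G2 σ φ z u w) (G2 u φ z w) w

/-- Memory evolution under a history-dependent encoder `ψ`:
`U_{t+1} = G²(U_t, φ^{z_{1:t-1}}_t, Z_t, W)` where `φ^{z_{1:t-1}}_t (w', u') = ψ_t (w', z_{1:t-1})`. -/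
def memψ (G2 : U → (W × U → X) → Z → W → U) (u1 : U)
    (ψ : (t : ℕ) → W → (Fin t → Z) → X) (w : W) :
    (t : ℕ) → (Fin t → Z) → U
  | 0, _ => u1
  | t + 1, zs =>
      G2 (memψ G2 u1 ψ w t (Fin.init zs))
        (fun p : W × U => ψ t p.1 (Fin.init zs)) (zs (Fin.last t)) w

/-- Joint pmf `P(W = w, Y_{1:t} = ys, Z_{1:t} = zs)` of the channel model with a
history-dependent deterministic encoder `ψ` (so `X_t = ψ_t (W, Z_{1:t-1})`). -/
noncomputable def jointPψ (Qf : X → PMF Y) (Qb : Y → PMF Z)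
    (ψ : (t : ℕ) → W → (Fin t → Z) → X)
    (t : ℕ) (w : W) (ys : Fin t → Y) (zs : Fin t → Z) : ℝ≥0∞ :=
  (Fintype.card W : ℝ≥0∞)⁻¹ *
    ∏ i : Fin t,
      Qf (ψ i w (fun j => zs (Fin.castLE i.2.le j))) (ys i) * Qb (ys i) (zs i)

/-- `P(W = w, Z_{1:t} = zs)` under the encoder `ψ`. -/
noncomputable def probWZψ (Qf : X → PMF Y) (Qb : Y → PMF Z)
    (ψ : (t : ℕ) → W → (Fin t → Z) → X)
    (t : ℕ) (w : W) (zs : Fin t → Z) : ℝ≥0∞ :=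
  ∑ ys : Fin t → Y, jointPψ Qf Qb ψ t w ys zs

/-- `P(W = w, Y_{1:t} = ys)` under the encoder `ψ`. -/
noncomputable def probWYψ (Qf : X → PMF Y) (Qb : Y → PMF Z)
    (ψ : (t : ℕ) → W → (Fin t → Z) → X)
    (t : ℕ) (ys : Fin t → Y) (w : W) : ℝ≥0∞ :=
  ∑ zs : Fin t → Z, jointPψ Qf Qb ψ t w ys zs

/-- The receiver belief process `(Π_t, H_t)` under a history-dependent encoder `ψ`:
`(Π_0, H_0) = (uniform, point mass at u₁)` and
`(Π_t, H_t) = F(Π_{t-1}, H_{t-1}, φ^{z_{1:t-1}}_t, y_t)`. -/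
noncomputable def beliefsψ (Qf : X → PMF Y) (Qb : Y → PMF Z)
    (G2 : U → (W × U → X) → Z → W → U) (u1 : U)
    (ψ : (t : ℕ) → W → (Fin t → Z) → X) :
    (t : ℕ) → (Fin t → Y) → (Fin t → Z) → Belief W U
  | 0, _, _ => b0 u1
  | t + 1, ys, zs =>
      Fb Qf Qb G2 (beliefsψ Qf Qb G2 u1 ψ t (Fin.init ys) (Fin.init zs))
        (fun p : W × U => ψ t p.1 (Fin.init zs)) (ys (Fin.last t))

/-! Helper lemmas -/

theorem jointPψ_snoc (Qf : X → PMF Y) (Qb : Y → PMF Z)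
    (ψ : (t : ℕ) → W → (Fin t → Z) → X) (s : ℕ) (w : W) (ys : Fin s → Y) (zs : Fin s → Z)
    (y : Y) (z : Z) :
    jointPψ Qf Qb ψ (s + 1) w (Fin.snoc ys y : Fin (s + 1) → Y)
        (Fin.snoc zs z : Fin (s + 1) → Z) =
      jointPψ Qf Qb ψ s w ys zs * (Qf (ψ s w zs) y * Qb y z) := by
  have h : ∀ (i : ℕ) (hi : i ≤ s) (hi' : i ≤ s + 1),
      (fun j : Fin i => (Fin.snoc zs z : Fin (s + 1) → Z) (Fin.castLE hi' j)) =
        fun j : Fin i => zs (Fin.castLE hi j) := by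
    intro i hi hi'
    funext j
    have : Fin.castLE hi' j = Fin.castSucc (Fin.castLE hi j) := by
      ext; simp
    rw [this, Fin.snoc_castSucc]
  unfold jointPψ
  rw [Fin.prod_univ_castSucc, mul_assoc]
  congr 2
  · refine Finset.prod_congr rfl fun i _ => ?_
    simp only [Fin.snoc_castSucc]
    have := h i i.2.le (Fin.castSucc i).2.le
    simp only [Fin.val_castSucc] at this ⊢
    rw [this]
  · simp only [Fin.snoc_last]
    have := h s le_rfl (Fin.last s).2.le
    simp only [Fin.val_last] at this ⊢
    rw [this]
    rfl

theorem sum_snoc (s : ℕ) (f : (Fin (s + 1) → Y) → ℝ≥0∞) :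
    ∑ ys : Fin (s + 1) → Y, f ys =
      ∑ ys : Fin s → Y, ∑ y : Y, f (Fin.snoc ys y : Fin (s + 1) → Y) := by
  rw [← (Fin.snocEquiv (fun _ : Fin (s + 1) => Y)).sum_comp, Fintype.sum_prod_type,
    Finset.sum_comm]
  rfl

theorem probWZψ_snoc (Qf : X → PMF Y) (Qb : Y → PMF Z)
    (ψ : (t : ℕ) → W → (Fin t → Z) → X) (s : ℕ) (w : W) (zs : Fin s → Z) (z : Z) :
    probWZψ Qf Qb ψ (s + 1) w (Fin.snoc zs z : Fin (s + 1) → Z) =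
      probWZψ Qf Qb ψ s w zs * ∑ y : Y, Qf (ψ s w zs) y * Qb y z := by
  unfold probWZψ
  rw [sum_snoc, Finset.sum_mul]
  simp only [jointPψ_snoc, Finset.mul_sum]

theorem jointPψ_ne_top [Nonempty W] (Qf : X → PMF Y) (Qb : Y → PMF Z)
    (ψ : (t : ℕ) → W → (Fin t → Z) → X) (s : ℕ) (w : W) (ys : Fin s → Y) (zs : Fin s → Z) :
    jointPψ Qf Qb ψ s w ys zs ≠ ∞ := by
  unfold jointPψ
  refine ENNReal.mul_ne_top (by simp) (ENNReal.prod_ne_top fun i _ => ?_)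
  exact ENNReal.mul_ne_top (PMF.apply_ne_top _ _) (PMF.apply_ne_top _ _)

theorem probWZψ_ne_top [Nonempty W] (Qf : X → PMF Y) (Qb : Y → PMF Z)
    (ψ : (t : ℕ) → W → (Fin t → Z) → X) (s : ℕ) (w : W) (zs : Fin s → Z) :
    probWZψ Qf Qb ψ s w zs ≠ ∞ := by
  unfold probWZψ
  exact ENNReal.sum_ne_top.2 fun ys _ => jointPψ_ne_top Qf Qb ψ s w ys zs

theorem tsum_law {ι B : Type*} [Fintype ι] (g : ι → B) [∀ i p, Decidable (g i = p)] (m : ι → ℝ≥0∞) (c : ℝ≥0∞)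
    (f : B → ℝ≥0∞) :
    ∑' p : B, ((∑ i, if g i = p then m i else 0) / c) * f p = (∑ i, m i * f (g i)) / c := by
  have h : ∀ p : B, ((∑ i, if g i = p then m i else 0) / c) * f p =
      ∑ i, (if p = g i then m i * f p / c else 0) := by
    intro p
    rw [div_eq_mul_inv, Finset.sum_mul, Finset.sum_mul]
    refine Finset.sum_congr rfl fun i _ => ?_
    by_cases hp : g i = p
    · rw [if_pos hp, if_pos hp.symm, div_eq_mul_inv]; ring
    · rw [if_neg hp, if_neg (Ne.symm hp)]; simp
  simp_rw [h]
  rw [Summable.tsum_finsetSum (fun i _ => ENNReal.summable)]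
  simp_rw [div_eq_mul_inv, Finset.sum_mul]
  refine Finset.sum_congr rfl fun i _ => ?_
  rw [tsum_eq_single (g i)]
  · simp
  · intro b hb; simp [hb]

/-- **Lemma 2 of the Appendix** (Statement 10).  Along any positive-probability feedback
history `z_{1:t-1}` (here of length `s`, with `t = s + 1 ≤ n`), the value function at
the sender's current belief state lower-bounds the conditional expectation (over the
next feedback symbol `Z_t`, generated by the encoder `ψ`) of the next value function:
`V_t(σ_t, u_t, w) ≤ Σ_{z_t} P(Z_t = z_t | W = w, Z_{1:t-1}) V_{t+1}(σ_{t+1}(z_t), u_{t+1}(z_t), w)`,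
where `V_t = Vk (n - s)` and `σ_t`, `σ_{t+1}(z_t)` are the conditional laws of the
receiver's belief state given the sender's information. -/
theorem value_function_submartingale
    [Nonempty W] [Nonempty X] [Nonempty Y] [Nonempty Z] [Nonempty U]
    (Qf : X → PMF Y) (Qb : Y → PMF Z)
    (G2 : U → (W × U → X) → Z → W → U) (u1 : U)
    (ψ : (t : ℕ) → W → (Fin t → Z) → X) (n : ℕ)
    (s : ℕ) (hs : s < n) (w : W) (zs : Fin s → Z)
    (hpos : 0 < probWZψ Qf Qb ψ s w zs) :
    Vk Qf Qb G2 (n - s)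
        (fun b =>
          (∑ ys : Fin s → Y,
            if beliefsψ Qf Qb G2 u1 ψ s ys zs = b then jointPψ Qf Qb ψ s w ys zs
            else 0) / probWZψ Qf Qb ψ s w zs)
        (memψ G2 u1 ψ w s zs) w ≤
      ∑ z : Z,
        (probWZψ Qf Qb ψ (s + 1) w (Fin.snoc zs z) / probWZψ Qf Qb ψ s w zs) *
          Vk Qf Qb G2 (n - s - 1)
            (fun b =>
              (∑ ys : Fin (s + 1) → Y,
                if beliefsψ Qf Qb G2 u1 ψ (s + 1) ys (Fin.snoc zs z) = b then
                  jointPψ Qf Qb ψ (s + 1) w ys (Fin.snoc zs z)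
                else 0) / probWZψ Qf Qb ψ (s + 1) w (Fin.snoc zs z))
            (memψ G2 u1 ψ w (s + 1) (Fin.snoc zs z)) w := by
  obtain ⟨k, hk⟩ : ∃ k, n - s = k + 1 := ⟨n - s - 1, by omega⟩
  have hk' : n - s - 1 = k := by omega
  rw [hk', hk]
  have hP0 := hpos.ne'
  have hPt := probWZψ_ne_top Qf Qb ψ s w zs
  rw [Vk]
  refine (iInf_le _ (fun p : W × U => ψ s p.1 zs)).trans ?_
  rw [Finset.sum_comm]
  refine Finset.sum_le_sum fun z _ => ?_
  rw [← Finset.sum_mul, probWZψ_snoc]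
  rw [mul_comm (probWZψ Qf Qb ψ s w zs) (∑ y : Y, Qf (ψ s w zs) y * Qb y z),
    ENNReal.mul_div_cancel_right hP0 hPt]
  have hmem : memψ G2 u1 ψ w (s + 1) (Fin.snoc zs z : Fin (s + 1) → Z) =
      G2 (memψ G2 u1 ψ w s zs) (fun p : W × U => ψ s p.1 zs) z w := by
    rw [memψ, Fin.init_snoc, Fin.snoc_last]
  rw [hmem]
  refine le_of_eq ?_
  congr 2
  funext b
  rw [G1, tsum_law (fun ys => beliefsψ Qf Qb G2 u1 ψ s ys zs)
    (fun ys => jointPψ Qf Qb ψ s w ys zs) (probWZψ Qf Qb ψ s w zs)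
    (fun p => ∑ y : Y, Qf (ψ s w zs) y * Qb y z *
      (if b = Fb Qf Qb G2 p (fun p : W × U => ψ s p.1 zs) y then 1 else 0)), sum_snoc]
  simp only [jointPψ_snoc, beliefsψ, Fin.init_snoc, Fin.snoc_last]
  rw [mul_comm (∑ y : Y, Qf (ψ s w zs) y * Qb y z), div_eq_mul_inv, div_eq_mul_inv,
    div_eq_mul_inv, mul_assoc, ENNReal.mul_inv (Or.inl hP0) (Or.inl hPt)]
  congr 1
  refine Finset.sum_congr rfl fun ys _ => ?_
  rw [Finset.mul_sum]
  refine Finset.sum_congr rfl fun y _ => ?_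
  by_cases hb : b = Fb Qf Qb G2 (beliefsψ Qf Qb G2 u1 ψ s ys zs)
      (fun p : W × U => ψ s p.1 zs) y
  · rw [if_pos hb, if_pos hb.symm, mul_one]
  · rw [if_neg hb, if_neg (Ne.symm hb)]; simp
end NoisyFeedback
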